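/- The cycle C_11 is the only well-indumatched unicyclic graph of girth 11; that is, every well-indumatched unicyclic graph whose unique cycle has length 11 is isomorphic to C_11. -/

import Mathlib

open SimpleGraph

/-- `M` is an induced matching of `G`: a set of edges of `G` such that no two distinct
edges of `M` share an endpoint or have endpoints joined by an edge of `G`. -/
def IsInducedMatching {V : Type*} (G : SimpleGraph V) (M : Set (Sym2 V)) : Prop :=
  M ⊆ G.edgeSet ∧
    ∀ e ∈ M, ∀ f ∈ M, e ≠ f → ∀ u ∈ e, ∀ v ∈ f, u ≠ v ∧ ¬ G.Adj u v

/-- `M` is a maximal induced matching of `G`. -/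
def IsMaximalInducedMatching {V : Type*} (G : SimpleGraph V) (M : Set (Sym2 V)) : Prop :=
  IsInducedMatching G M ∧
    ∀ N : Set (Sym2 V), IsInducedMatching G N → M ⊆ N → N = M

/-- `G` is well-indumatched: all of its maximal induced matchings have the same size. -/
def WellIndumatched {V : Type*} (G : SimpleGraph V) : Prop :=
  ∀ M N : Set (Sym2 V), IsMaximalInducedMatching G M → IsMaximalInducedMatching G N →
    M.ncard = N.ncard

/-!
If `A` and `B` are induced matchings of a well-indumatched graph `G` and every edge left over by `A`
(that is, not meeting `N[A]`) is also left over by `B`, then `|B| ≤ |A|`. Moreover `G - N[M]` is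
well-indumatched for every induced matching `M` of `G`.

A unicyclic graph is a cycle with a tree hung at each vertex. Let the cycle have length 11, and
delete `N[M]` for an induced matching `M` far from the cycle, chosen so that the surviving branches
have height at most two. Comparing small matchings on and near the cycle then shows that no branch
survives at all: first the branches of height two are excluded, then those of height one.

So if some `x` off the cycle is adjacent to a cycle vertex `b`, then `x` lies in `N[M]`. Trade all
edges of `M` in the branch at `b` for a single edge at `x`. Deleting the closed neighbourhood of the
new matching removes `b` and no other vertex of the cycle, nor does any other branch survive. This
leaves a path on ten vertices, which has maximal induced matchings of sizes two and three.
-/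

section InducedMatching

variable {V : Type*} {G : SimpleGraph V} {M N A B : Set (Sym2 V)}

/-- Two edges are apart in `G` if they share no endpoint and no edge of `G` joins them; an induced
matching is a set of edges that are pairwise apart. -/
def Apart (G : SimpleGraph V) (e f : Sym2 V) : Prop :=
  ∀ u ∈ e, ∀ v ∈ f, u ≠ v ∧ ¬ G.Adj u v

/-- The closed neighbourhood `N[M]` of the set of endpoints of the edges in `M`. -/
def closedNeighbors (G : SimpleGraph V) (M : Set (Sym2 V)) : Set V :=
  {u | ∃ e ∈ M, ∃ w ∈ e, u = w ∨ G.Adj u w}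

/-- The graph `G - N[M]` in which the edges compatible with the induced matching `M` live. The
vertices of `N[M]` are kept as isolated vertices, so that all residual graphs of `G` have the vertex
type of `G`. -/
def residualGraph (G : SimpleGraph V) (M : Set (Sym2 V)) : SimpleGraph V where
  Adj u v := G.Adj u v ∧ u ∉ closedNeighbors G M ∧ v ∉ closedNeighbors G M
  symm := ⟨fun _ _ h => ⟨h.1.symm, h.2.2, h.2.1⟩⟩
  loopless := ⟨fun _ h => h.1.ne rfl⟩

theorem Apart.symm {e f : Sym2 V} (h : Apart G e f) : Apart G f e :=
  fun u hu v hv => ⟨(h v hv u hu).1.symm, fun huv => (h v hv u hu).2 huv.symm⟩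

theorem isInducedMatching_iff :
    IsInducedMatching G M ↔ M ⊆ G.edgeSet ∧ M.Pairwise (Apart G) :=
  Iff.rfl

theorem isInducedMatching_empty : IsInducedMatching G ∅ := by
  simp [isInducedMatching_iff]

theorem mem_closedNeighbors_of_mem {e : Sym2 V} {u : V} (he : e ∈ M) (hu : u ∈ e) :
    u ∈ closedNeighbors G M :=
  ⟨e, he, u, hu, Or.inl rfl⟩

theorem apart_of_notMem_closedNeighbors {e f : Sym2 V} (he : e ∈ M)
    (hf : ∀ v ∈ f, v ∉ closedNeighbors G M) : Apart G f e :=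
  fun v hv u hu => ⟨fun hvu => hf v hv ⟨e, he, u, hu, Or.inl hvu⟩,
    fun hvu => hf v hv ⟨e, he, u, hu, Or.inr hvu⟩⟩

theorem mem_edgeSet_residualGraph_iff {e : Sym2 V} : e ∈ (residualGraph G M).edgeSet ↔
    e ∈ G.edgeSet ∧ ∀ v ∈ e, v ∉ closedNeighbors G M := by
  induction e with
  | _ a b => exact and_congr_right' (Sym2.ball (p := fun v => v ∉ closedNeighbors G M)).symm

theorem residualGraph_le : residualGraph G M ≤ G := fun _ _ h => h.1

theorem isInducedMatching_residualGraph_iff : IsInducedMatching (residualGraph G M) N ↔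
    N ⊆ (residualGraph G M).edgeSet ∧ IsInducedMatching G N := by
  refine ⟨fun hN => ⟨hN.1, hN.1.trans (edgeSet_mono residualGraph_le), ?_⟩,
    fun hN => ⟨hN.1, fun e he f hf hef u hu v hv => ?_⟩⟩
  · intro e he f hf hef u hu v hv
    refine ⟨(hN.2 e he f hf hef u hu v hv).1, fun huv => (hN.2 e he f hf hef u hu v hv).2 ⟨huv, ?_⟩⟩
    exact ⟨(mem_edgeSet_residualGraph_iff.1 (hN.1 he)).2 u hu,
      (mem_edgeSet_residualGraph_iff.1 (hN.1 hf)).2 v hv⟩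
  · exact (hN.2.2 e he f hf hef u hu v hv).imp_right fun hG hR => hG hR.1

namespace IsInducedMatching

theorem mono (hN : IsInducedMatching G N) (hMN : M ⊆ N) : IsInducedMatching G M :=
  ⟨hMN.trans hN.1, Set.Pairwise.mono hMN hN.2⟩

theorem union (hM : IsInducedMatching G M) (hN : IsInducedMatching (residualGraph G M) N) :
    IsInducedMatching G (M ∪ N) := by
  obtain ⟨hNres, hN⟩ := isInducedMatching_residualGraph_iff.1 hN
  refine ⟨Set.union_subset hM.1 hN.1, (Set.pairwise_union (r := Apart G)).2
    ⟨hM.2, hN.2, fun e he f hf _ => ?_⟩⟩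
  have hfe : Apart G f e := apart_of_notMem_closedNeighbors he
    (mem_edgeSet_residualGraph_iff.1 (hNres hf)).2
  exact ⟨hfe.symm, hfe⟩

theorem insert {u v : V} (hM : IsInducedMatching G M) (huv : G.Adj u v)
    (hu : u ∉ closedNeighbors G M) (hv : v ∉ closedNeighbors G M) :
    IsInducedMatching G (insert s(u, v) M) := by
  rw [Set.insert_eq, Set.union_comm]
  refine hM.union ⟨?_, Set.pairwise_singleton s(u, v) (Apart (residualGraph G M))⟩
  exact Set.singleton_subset_iff.2 ⟨huv, hu, hv⟩

theorem disjoint_of_residual (hN : IsInducedMatching (residualGraph G M) N) : Disjoint M N := by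
  rw [Set.disjoint_left]
  intro e heM heN
  exact (mem_edgeSet_residualGraph_iff.1 (hN.1 heN)).2 _ e.out_fst_mem
    (mem_closedNeighbors_of_mem heM e.out_fst_mem)

theorem sdiff (hN : IsInducedMatching G N) (hMN : M ⊆ N) :
    IsInducedMatching (residualGraph G M) (N \ M) := by
  refine isInducedMatching_residualGraph_iff.2 ⟨fun e he => ?_, hN.mono Set.sdiff_subset⟩
  refine mem_edgeSet_residualGraph_iff.2 ⟨hN.1 he.1, ?_⟩
  rintro u hu ⟨f, hf, w, hw, huw⟩
  have hef : e ≠ f := fun h => he.2 (h ▸ hf)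
  have hapart := hN.2 e he.1 f (hMN hf) hef u hu w hw
  exact huw.elim hapart.1 hapart.2

theorem exists_maximal [Finite V] (hM : IsInducedMatching G M) :
    ∃ N, M ⊆ N ∧ IsMaximalInducedMatching G N := by
  obtain ⟨N, hMN, hN⟩ := (Set.toFinite {N | IsInducedMatching G N}).exists_le_maximal hM
  exact ⟨N, hMN, hN.1, fun K hK hNK => (hN.2 hK hNK).antisymm hNK⟩

end IsInducedMatching

theorem IsMaximalInducedMatching.union_residual (hM : IsInducedMatching G M)
    (hN : IsMaximalInducedMatching (residualGraph G M) N) : IsMaximalInducedMatching G (M ∪ N) := by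
  refine ⟨hM.union hN.1, fun K hK hMNK => ?_⟩
  have hMK : M ⊆ K := Set.subset_union_left.trans hMNK
  have hNK : N ⊆ K \ M := Set.subset_sdiff.2
    ⟨Set.subset_union_right.trans hMNK, hN.1.disjoint_of_residual.symm⟩
  rw [← hN.2 (K \ M) (hK.sdiff hMK) hNK, Set.union_sdiff_cancel hMK]

theorem exists_isInducedMatching_dominating_on [Finite V] (G : SimpleGraph V) (D : Set V) :
    ∃ M, IsInducedMatching G M ∧ (∀ e ∈ M, ∀ u ∈ e, u ∈ D) ∧ ∀ u ∈ D, ∀ v ∈ D, G.Adj u v →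
      u ∈ closedNeighbors G M ∨ v ∈ closedNeighbors G M := by
  obtain ⟨M, -, hM⟩ := (Set.toFinite {M | IsInducedMatching G M ∧
    ∀ e ∈ M, ∀ u ∈ e, u ∈ D}).exists_le_maximal (a := ∅) ⟨isInducedMatching_empty, by simp⟩
  refine ⟨M, hM.1.1, hM.1.2, fun u hu v hv huv => ?_⟩
  by_contra! hnot
  have hins : IsInducedMatching G (insert s(u, v) M) ∧ ∀ e ∈ insert s(u, v) M, ∀ w ∈ e, w ∈ D :=
    ⟨hM.1.1.insert huv hnot.1 hnot.2, Set.forall_mem_insert.2 ⟨Sym2.ball.2 ⟨hu, hv⟩, hM.1.2⟩⟩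
  exact hnot.1 (mem_closedNeighbors_of_mem (hM.2 hins (Set.subset_insert _ _)
    (Set.mem_insert _ _)) (Sym2.mem_mk_left u v))

namespace WellIndumatched

theorem residual [Finite V] (hG : WellIndumatched G) (hM : IsInducedMatching G M) :
    WellIndumatched (residualGraph G M) := by
  intro N N' hN hN'
  have hcard := hG _ _ (hN.union_residual hM) (hN'.union_residual hM)
  rw [Set.ncard_union_eq hN.1.disjoint_of_residual,
    Set.ncard_union_eq hN'.1.disjoint_of_residual] at hcard
  exact Nat.add_left_cancel hcard

/-- Complete `A` to a maximal induced matching `A ∪ N`; then `B ∪ N` is an induced matching too. -/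
theorem ncard_le [Finite V] (hG : WellIndumatched G) (hA : IsInducedMatching G A)
    (hB : IsInducedMatching G B) (hAB : residualGraph G A ≤ residualGraph G B) :
    B.ncard ≤ A.ncard := by
  obtain ⟨N, -, hN⟩ := (isInducedMatching_empty (G := residualGraph G A)).exists_maximal
  have hNB : IsInducedMatching (residualGraph G B) N := by
    obtain ⟨hNA, hNG⟩ := isInducedMatching_residualGraph_iff.1 hN.1
    exact isInducedMatching_residualGraph_iff.2 ⟨hNA.trans (edgeSet_mono hAB), hNG⟩
  obtain ⟨K, hBNK, hK⟩ := (hB.union hNB).exists_maximal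
  have hcard : B.ncard + N.ncard ≤ A.ncard + N.ncard := calc
    B.ncard + N.ncard = (B ∪ N).ncard := (Set.ncard_union_eq hNB.disjoint_of_residual).symm
    _ ≤ K.ncard := Set.ncard_le_ncard hBNK
    _ = (A ∪ N).ncard := hG _ _ hK (hN.union_residual hA)
    _ = A.ncard + N.ncard := Set.ncard_union_eq hN.1.disjoint_of_residual
  exact Nat.le_of_add_le_add_right hcard

/-- `σ` maps `G` to a smaller graph `T`, possibly contracting edges, so a family of pairwise apart
pairs in `T` that lift to edges of `G` lifts to an induced matching of `G`. -/
theorem ncard_le_of_weakHom [Finite V] {S : Type*} {T : SimpleGraph S} {σ : V → S}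
    {B₀ : Set (Sym2 S)} (hG : WellIndumatched G)
    (hσ : ∀ u v, G.Adj u v → σ u = σ v ∨ T.Adj (σ u) (σ v)) (hA : IsInducedMatching G A)
    (hlift : B₀ ⊆ Sym2.map σ '' G.edgeSet) (hapart : B₀.Pairwise (Apart T))
    (hclear : ∀ u ∈ (residualGraph G A).support, σ u ∉ closedNeighbors T B₀) :
    B₀.ncard ≤ A.ncard := by
  obtain ⟨B, hBG, hB⟩ := Set.SurjOn.exists_bijOn_subset hlift
  have hσ' : ∀ u v, u = v ∨ G.Adj u v → σ u = σ v ∨ T.Adj (σ u) (σ v) :=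
    fun u v huv => huv.elim (fun h => Or.inl (congrArg σ h)) (hσ u v)
  have hBind : IsInducedMatching G B := by
    refine ⟨hBG, fun e he f hf hef u hu v hv => not_or.1 fun huv => ?_⟩
    have hσuv := hapart (hB.mapsTo he) (hB.mapsTo hf) (hB.injOn.ne he hf hef)
      (σ u) (Sym2.mem_map.2 ⟨u, hu, rfl⟩) (σ v) (Sym2.mem_map.2 ⟨v, hv, rfl⟩)
    exact (hσ' u v huv).elim hσuv.1 hσuv.2
  have hmap : ∀ u ∈ closedNeighbors G B, σ u ∈ closedNeighbors T B₀ := by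
    rintro u ⟨e, he, w, hw, huw⟩
    exact ⟨_, hB.mapsTo he, σ w, Sym2.mem_map.2 ⟨w, hw, rfl⟩, hσ' u w huw⟩
  have hres : residualGraph G A ≤ residualGraph G B := fun u v huv =>
    ⟨huv.1, mt (hmap u) (hclear u ⟨v, huv⟩), mt (hmap v) (hclear v ⟨u, huv.symm⟩)⟩
  rw [← hB.image_eq, hB.injOn.ncard_image]
  exact hG.ncard_le hA hBind hres

end WellIndumatched

end InducedMatching

section Decidability

variable {V : Type*} [Fintype V] [DecidableEq V] (G : SimpleGraph V) [DecidableRel G.Adj]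

instance (e f : Sym2 V) : Decidable (Apart G e f) :=
  inferInstanceAs (Decidable (∀ u ∈ e, ∀ v ∈ f, u ≠ v ∧ ¬ G.Adj u v))

instance (M : Finset (Sym2 V)) (u : V) : Decidable (u ∈ closedNeighbors G M) :=
  inferInstanceAs (Decidable (∃ e ∈ M, ∃ w ∈ e, u = w ∨ G.Adj u w))

instance (M : Finset (Sym2 V)) : Decidable ((M : Set (Sym2 V)).Pairwise (Apart G)) :=
  inferInstanceAs (Decidable (∀ e ∈ M, ∀ f ∈ M, e ≠ f → Apart G e f))

instance (M : Finset (Sym2 V)) : Decidable (IsInducedMatching G M) :=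
  inferInstanceAs (Decidable ((∀ e ∈ M, e ∈ G.edgeSet) ∧ (M : Set (Sym2 V)).Pairwise (Apart G)))

end Decidability

/-- The corona of `F`: the base graph `F`, on the vertices `Sum.inl i`, with one pendant vertex
`Sum.inr i` attached at each base vertex `i`. -/
def corona {ι : Type*} (F : SimpleGraph ι) : SimpleGraph (ι ⊕ ι) where
  Adj
    | .inl i, .inl j => F.Adj i j
    | .inl i, .inr j => i = j
    | .inr i, .inl j => i = j
    | .inr _, .inr _ => False
  symm := ⟨by rintro (i | i) (j | j) <;> simp [F.adj_comm, eq_comm]⟩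
  loopless := ⟨by rintro (_ | _) <;> simp⟩

instance {ι : Type*} [DecidableEq ι] (F : SimpleGraph ι) [DecidableRel F.Adj] :
    DecidableRel (corona F).Adj
  | .inl i, .inl j => inferInstanceAs (Decidable (F.Adj i j))
  | .inl i, .inr j => inferInstanceAs (Decidable (i = j))
  | .inr i, .inl j => inferInstanceAs (Decidable (i = j))
  | .inr _, .inr _ => inferInstanceAs (Decidable False)

theorem eq_univ_of_preconnected_of_forall_adj {V : Type*} {G : SimpleGraph V} {S : Set V}
    (hG : G.Preconnected) (hne : S.Nonempty) (hS : ∀ u ∈ S, ∀ v, G.Adj u v → v ∈ S) :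
    S = Set.univ := by
  refine Set.eq_univ_of_forall fun v => by_contra fun hv => ?_
  obtain ⟨u, hu⟩ := hne
  obtain ⟨p⟩ := hG u v
  obtain ⟨d, -, hfst, hsnd⟩ := p.exists_boundary_dart S hu hv
  exact hsnd (hS _ hfst _ d.adj)

section HungGraphs

variable {V ι : Type*} {G H : SimpleGraph V} {F F' : SimpleGraph ι} {c : ι → V} {ρ : V → ι}
  {A : Set (Sym2 ι)} {i j : ι} {u v : V}

/-- `G` consists of an induced copy `c` of the base graph `F` together with disjoint branches, one
hanging at each base vertex: `ρ` sends a vertex to the index of the base vertex at which its branch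
hangs. Vertices in components of `G` without a base vertex may be assigned to any branch, as long as
`ρ` is constant on the component. -/
structure IsHungOn (G : SimpleGraph V) (F : SimpleGraph ι) (c : ι → V) (ρ : V → ι) : Prop where
  adj_iff : ∀ i j, G.Adj (c i) (c j) ↔ F.Adj i j
  root_base : ∀ i, ρ (c i) = i
  root_eq : ∀ u v, G.Adj u v → u ∉ Set.range c → ρ u = ρ v

/-- A vertex `v` of the base `S` carries a pendant vertex if it has a neighbour off the base. -/
def HasPendantVertex (G : SimpleGraph V) (S : Set V) (v : V) : Prop :=
  ∃ z ∉ S, G.Adj v z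

/-- A vertex `v` of the base `S` carries a pendant path if a path with two edges leaves the base
at `v`. -/
def HasPendantPath (G : SimpleGraph V) (S : Set V) (v : V) : Prop :=
  ∃ z ∉ S, ∃ w ∉ S, G.Adj v z ∧ G.Adj z w

/-- The branches of `G` over the base `S` have height at most two: each edge off the base has an
endpoint adjacent to the base. -/
def IsShallow (G : SimpleGraph V) (S : Set V) : Prop :=
  ∀ u ∉ S, ∀ v ∉ S, G.Adj u v → (∃ b ∈ S, G.Adj b u) ∨ ∃ b ∈ S, G.Adj b v

open Classical in
/-- The map of a hung graph to the corona of its base that contracts each branch to a point. -/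
noncomputable def shadow (c : ι → V) (ρ : V → ι) (u : V) : ι ⊕ ι :=
  if u ∈ Set.range c then .inl (ρ u) else .inr (ρ u)

theorem shadow_of_mem_range (hu : u ∈ Set.range c) : shadow c ρ u = .inl (ρ u) :=
  if_pos hu

theorem shadow_of_notMem_range (hu : u ∉ Set.range c) : shadow c ρ u = .inr (ρ u) :=
  if_neg hu

namespace IsHungOn

theorem of_le (h : IsHungOn G F c ρ) (hle : H ≤ G)
    (hadj : ∀ i j, H.Adj (c i) (c j) ↔ F'.Adj i j) : IsHungOn H F' c ρ :=
  ⟨hadj, h.root_base, fun u v huv => h.root_eq u v (hle huv)⟩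

theorem relabel {κ : Type*} {K : SimpleGraph κ} (h : IsHungOn G F c ρ) (φ : K ≃g F) :
    IsHungOn G K (c ∘ φ) (φ.symm ∘ ρ) where
  adj_iff i j := (h.adj_iff _ _).trans φ.map_adj_iff
  root_base i := by simp [h.root_base]
  root_eq u v huv hu := by
    rw [φ.surjective.range_comp] at hu
    exact congrArg φ.symm (h.root_eq u v huv hu)

theorem injective (h : IsHungOn G F c ρ) : Function.Injective c :=
  Function.LeftInverse.injective h.root_base

theorem nonempty_iso (h : IsHungOn G F c ρ) (hc : Set.range c = Set.univ) : Nonempty (G ≃g F) := by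
  let φ : F ≃g G := ⟨Equiv.ofBijective c ⟨h.injective, Set.range_eq_univ.1 hc⟩, h.adj_iff _ _⟩
  exact ⟨φ.symm⟩

theorem root_eq_of_adj_base (h : IsHungOn G F c ρ) (hu : u ∉ Set.range c)
    (hadj : G.Adj (c i) u) : ρ u = i :=
  (h.root_eq u (c i) hadj.symm hu).trans (h.root_base i)

theorem shadow_base (h : IsHungOn G F c ρ) (i : ι) : shadow c ρ (c i) = .inl i := by
  rw [shadow_of_mem_range (Set.mem_range_self i), h.root_base]

theorem shadow_eq_or_adj (h : IsHungOn G F c ρ) (huv : G.Adj u v) :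
    shadow c ρ u = shadow c ρ v ∨ (corona F).Adj (shadow c ρ u) (shadow c ρ v) := by
  by_cases hu : u ∈ Set.range c <;> by_cases hv : v ∈ Set.range c
  · obtain ⟨i, rfl⟩ := hu
    obtain ⟨j, rfl⟩ := hv
    rw [h.shadow_base, h.shadow_base]
    exact Or.inr ((h.adj_iff i j).1 huv)
  · rw [shadow_of_mem_range hu, shadow_of_notMem_range hv]
    exact Or.inr (h.root_eq v u huv.symm hv).symm
  · rw [shadow_of_notMem_range hu, shadow_of_mem_range hv]
    exact Or.inr (h.root_eq u v huv hu)
  · rw [shadow_of_notMem_range hu, shadow_of_notMem_range hv, h.root_eq u v huv hu]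
    exact Or.inl rfl

theorem lift_base_edge (h : IsHungOn G F c ρ) (hij : F.Adj i j) :
    s(.inl i, .inl j) ∈ Sym2.map (shadow c ρ) '' G.edgeSet :=
  ⟨s(c i, c j), (h.adj_iff i j).2 hij, by simp [h.shadow_base]⟩

theorem lift_pendant_edge (h : IsHungOn G F c ρ) (hi : HasPendantVertex G (Set.range c) (c i)) :
    s(.inl i, .inr i) ∈ Sym2.map (shadow c ρ) '' G.edgeSet := by
  obtain ⟨z, hz, hadj⟩ := hi
  refine ⟨s(c i, z), hadj, ?_⟩
  rw [Sym2.map_mk, h.shadow_base, shadow_of_notMem_range hz, h.root_eq_of_adj_base hz hadj]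

theorem lift_branch_edge (h : IsHungOn G F c ρ) (hi : HasPendantPath G (Set.range c) (c i)) :
    s(.inr i, .inr i) ∈ Sym2.map (shadow c ρ) '' G.edgeSet := by
  obtain ⟨z, hz, w, hw, hcz, hzw⟩ := hi
  refine ⟨s(z, w), hzw, ?_⟩
  rw [Sym2.map_mk, shadow_of_notMem_range hz, shadow_of_notMem_range hw,
    ← h.root_eq z w hzw hz, h.root_eq_of_adj_base hz hcz]

theorem isInducedMatching_image (h : IsHungOn G F c ρ) (hA : IsInducedMatching F A) :
    IsInducedMatching G (Sym2.map c '' A) := by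
  refine ⟨?_, ?_⟩
  · rintro _ ⟨e, he, rfl⟩
    induction e with
    | _ i j => exact (h.adj_iff i j).2 (hA.1 he)
  · rintro _ ⟨e, he, rfl⟩ _ ⟨f, hf, rfl⟩ hef u hu v hv
    obtain ⟨i, hi, rfl⟩ := Sym2.mem_map.1 hu
    obtain ⟨j, hj, rfl⟩ := Sym2.mem_map.1 hv
    rw [h.injective.ne_iff, h.adj_iff]
    exact hA.2 e he f hf (fun heq => hef (congrArg _ heq)) i hi j hj

theorem mem_closedNeighbors_image (h : IsHungOn G F c ρ) (hi : i ∈ closedNeighbors F A) :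
    c i ∈ closedNeighbors G (Sym2.map c '' A) := by
  obtain ⟨e, he, j, hj, hij⟩ := hi
  exact ⟨_, Set.mem_image_of_mem _ he, c j, Sym2.mem_map.2 ⟨j, hj, rfl⟩,
    hij.imp (congrArg c) (h.adj_iff i j).2⟩

end IsHungOn

theorem inl_mem_closedNeighbors_corona {B : Set (Sym2 (ι ⊕ ι))}
    (hi : .inr i ∈ closedNeighbors (corona F) B) : .inl i ∈ closedNeighbors (corona F) B := by
  obtain ⟨e, he, w | w, hw, hiw⟩ := hi
  · exact ⟨e, he, .inl w, hw, Or.inl (by simpa [corona] using hiw)⟩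
  · exact ⟨e, he, .inr w, hw, Or.inr (by simpa [corona] using hiw)⟩

namespace IsHungOn

theorem base_notMem_support (h : IsHungOn G F c ρ) (hi : i ∈ closedNeighbors F A) :
    c i ∉ (residualGraph G (Sym2.map c '' A)).support :=
  fun ⟨_, hadj⟩ => hadj.2.1 (h.mem_closedNeighbors_image hi)

theorem base_notMem_support_of_forall_adj (h : IsHungOn G F c ρ)
    (hi : ¬ HasPendantVertex G (Set.range c) (c i))
    (hnbr : ∀ j, F.Adj i j → j ∈ closedNeighbors F A) :
    c i ∉ (residualGraph G (Sym2.map c '' A)).support := by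
  rintro ⟨v, hadj, -, hv⟩
  by_cases hvc : v ∈ Set.range c
  · obtain ⟨j, rfl⟩ := hvc
    exact hv (h.mem_closedNeighbors_image (hnbr j ((h.adj_iff i j).1 hadj)))
  · exact hi ⟨v, hvc, hadj⟩

theorem eq_root_of_adj_of_mem_range (h : IsHungOn G F c ρ) (hu : u ∉ Set.range c)
    (huv : G.Adj u v) (hv : v ∈ Set.range c) : v = c (ρ u) := by
  obtain ⟨j, rfl⟩ := hv
  rw [h.root_eq u (c j) huv hu, h.root_base]

theorem adj_root_or_adj_root (h : IsHungOn G F c ρ) (hG : IsShallow G (Set.range c))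
    (hu : u ∉ Set.range c) (huv : G.Adj u v) : G.Adj (c (ρ u)) u ∨ G.Adj (c (ρ u)) v := by
  by_cases hv : v ∈ Set.range c
  · rw [← h.eq_root_of_adj_of_mem_range hu huv hv]
    exact Or.inl huv.symm
  · rcases hG u hu v hv huv with ⟨_, ⟨j, rfl⟩, hj⟩ | ⟨_, ⟨j, rfl⟩, hj⟩
    · rw [h.root_eq_of_adj_base hu hj]
      exact Or.inl hj
    · rw [h.root_eq u v huv hu, h.root_eq_of_adj_base hv hj]
      exact Or.inr hj

theorem branch_notMem_support_of_mem (h : IsHungOn G F c ρ) (hG : IsShallow G (Set.range c))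
    {e : Sym2 ι} (he : e ∈ A) (hu : u ∉ Set.range c) (hroot : ρ u ∈ e) :
    u ∉ (residualGraph G (Sym2.map c '' A)).support := by
  rintro ⟨v, huv, hu', hv'⟩
  have hnbr : ∀ w, G.Adj (c (ρ u)) w → w ∈ closedNeighbors G (Sym2.map c '' A) := fun w hw =>
    ⟨_, Set.mem_image_of_mem _ he, _, Sym2.mem_map.2 ⟨_, hroot, rfl⟩, Or.inr hw.symm⟩
  exact (h.adj_root_or_adj_root hG hu huv).elim (hu' ∘ hnbr u) (hv' ∘ hnbr v)

theorem branch_notMem_support_of_not_hasPendantPath (h : IsHungOn G F c ρ)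
    (hG : IsShallow G (Set.range c)) (hu : u ∉ Set.range c)
    (hpath : ¬ HasPendantPath G (Set.range c) (c (ρ u)))
    (hbase : c (ρ u) ∉ (residualGraph G (Sym2.map c '' A)).support) :
    u ∉ (residualGraph G (Sym2.map c '' A)).support := by
  rintro ⟨v, huv⟩
  by_cases hv : v ∈ Set.range c
  · rw [h.eq_root_of_adj_of_mem_range hu huv.1 hv] at huv
    exact hbase ((mem_support _).2 ⟨u, huv.symm⟩)
  · rcases h.adj_root_or_adj_root hG hu huv.1 with hadj | hadj
    · exact hpath ⟨u, hu, v, hv, hadj, huv.1⟩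
    · exact hpath ⟨v, hv, u, hu, hadj, huv.1.symm⟩

/-- The hypotheses on `B` say that its lift to `G` is an induced matching whose closed neighbourhood
contains no endpoint of an edge left over by `A`. -/
theorem card_le [Finite V] (h : IsHungOn G F c ρ) (hG : WellIndumatched G)
    {A : Finset (Sym2 ι)} {B : Finset (Sym2 (ι ⊕ ι))} (hA : IsInducedMatching F A)
    (hlift : ∀ e ∈ B, e ∈ Sym2.map (shadow c ρ) '' G.edgeSet)
    (hB : (B : Set (Sym2 (ι ⊕ ι))).Pairwise (Apart (corona F)))
    (hbase : ∀ i, .inl i ∈ closedNeighbors (corona F) B →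
      c i ∉ (residualGraph G (Sym2.map c '' A)).support)
    (hbranch : ∀ u ∉ Set.range c, .inr (ρ u) ∈ closedNeighbors (corona F) B →
      u ∉ (residualGraph G (Sym2.map c '' A)).support) : B.card ≤ A.card := by
  have hcard := hG.ncard_le_of_weakHom (fun u v => h.shadow_eq_or_adj)
    (h.isInducedMatching_image hA) hlift hB fun u hu hmem => by
      by_cases huc : u ∈ Set.range c
      · obtain ⟨i, rfl⟩ := huc
        exact hbase i (h.shadow_base i ▸ hmem) hu
      · exact hbranch u huc (shadow_of_notMem_range huc ▸ hmem) hu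
  rwa [Set.ncard_image_of_injective _ (Sym2.map.injective h.injective), Set.ncard_coe_finset,
    Set.ncard_coe_finset] at hcard

theorem card_le_of_forall_not_hasPendantPath [Finite V] (h : IsHungOn G F c ρ)
    (hG : WellIndumatched G) (hS : IsShallow G (Set.range c))
    (hpath : ∀ i, ¬ HasPendantPath G (Set.range c) (c i))
    {A : Finset (Sym2 ι)} {B : Finset (Sym2 (ι ⊕ ι))} (hA : IsInducedMatching F A)
    (hlift : ∀ e ∈ B, e ∈ Sym2.map (shadow c ρ) '' G.edgeSet)
    (hB : (B : Set (Sym2 (ι ⊕ ι))).Pairwise (Apart (corona F)))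
    (hbase : ∀ i, .inl i ∈ closedNeighbors (corona F) B →
      c i ∉ (residualGraph G (Sym2.map c '' A)).support) : B.card ≤ A.card :=
  h.card_le hG hA hlift hB hbase fun _ hu hmem =>
    h.branch_notMem_support_of_not_hasPendantPath hS hu (hpath _)
      (hbase _ (inl_mem_closedNeighbors_corona hmem))

end IsHungOn

theorem exists_isInducedMatching_isShallow_residualGraph [Finite V] (G : SimpleGraph V)
    (S : Set V) : ∃ M, IsInducedMatching G M ∧ Disjoint S (closedNeighbors G M) ∧
      IsShallow (residualGraph G M) S := by
  obtain ⟨M, hM, hfar, hdom⟩ :=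
    exists_isInducedMatching_dominating_on G {u | ∀ b ∈ S, b ≠ u ∧ ¬ G.Adj b u}
  have hdisj : Disjoint S (closedNeighbors G M) := by
    rw [Set.disjoint_left]
    rintro b hb ⟨e, he, w, hw, hbw⟩
    exact hbw.elim (hfar e he w hw b hb).1 (hfar e he w hw b hb).2
  refine ⟨M, hM, hdisj, fun u hu v hv huv => ?_⟩
  by_contra! hnot
  have hfar' : ∀ w ∉ S, w ∉ closedNeighbors G M → (∀ b ∈ S, ¬ (residualGraph G M).Adj b w) →
      ∀ b ∈ S, b ≠ w ∧ ¬ G.Adj b w := fun w hwS hwM hw b hb =>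
    ⟨fun hbw => hwS (hbw ▸ hb), fun hbw => hw b hb ⟨hbw, Set.disjoint_left.1 hdisj hb, hwM⟩⟩
  exact (hdom u (hfar' u hu huv.2.1 hnot.1) v (hfar' v hv huv.2.2 hnot.2) huv.1).elim
    huv.2.1 huv.2.2

namespace IsHungOn

/-- Inside the branch at `i`, all edges of `M` are traded for one edge `xy` with `x` adjacent to
`c i`; the other branches keep their part of `M`. -/
theorem exists_isInducedMatching_dominating_base_iff (h : IsHungOn G F c ρ) {M : Set (Sym2 V)}
    (hM : IsInducedMatching G M) (hdisj : Disjoint (Set.range c) (closedNeighbors G M)) {x : V}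
    (hxc : x ∉ Set.range c) (hcx : G.Adj (c i) x) (hxM : x ∈ closedNeighbors G M) :
    ∃ N, IsInducedMatching G N ∧ (∀ j, c j ∈ closedNeighbors G N ↔ j = i) ∧
      ∀ u, ρ u ≠ i → u ∈ closedNeighbors G M → u ∈ closedNeighbors G N := by
  have hc : ∀ j, c j ∉ closedNeighbors G M := fun j =>
    Set.disjoint_left.1 hdisj (Set.mem_range_self j)
  have hoff : ∀ e ∈ M, ∀ u ∈ e, u ∉ Set.range c := fun e he u hu huc =>
    Set.disjoint_left.1 hdisj huc (mem_closedNeighbors_of_mem he hu)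
  have hroot : ∀ u w, w ∉ Set.range c → u = w ∨ G.Adj u w → ρ u = ρ w := fun u w hw huw =>
    huw.elim (congrArg ρ) fun hadj => (h.root_eq w u hadj.symm hw).symm
  obtain ⟨e, he, y, hy, rfl | hxy⟩ := hxM
  · exact absurd ⟨e, he, x, hy, Or.inr hcx⟩ (hc i)
  have hρx : ρ x = i := h.root_eq_of_adj_base hxc hcx
  have hρy : ρ y = i := (hroot x y (hoff e he y hy) (Or.inr hxy)).symm.trans hρx
  let L : Set (Sym2 V) := {f ∈ M | ∀ w ∈ f, ρ w ≠ i}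
  have hL : ∀ u, ρ u = i → u ∉ closedNeighbors G L := by
    rintro u hu ⟨f, hf, w, hw, huw⟩
    exact hf.2 w hw ((hroot u w (hoff f hf.1 w hw) huw).symm.trans hu)
  refine ⟨insert s(x, y) L, (hM.mono (Set.sep_subset _ _)).insert hxy (hL x hρx) (hL y hρy),
    fun j => ⟨?_, ?_⟩, ?_⟩
  · rintro ⟨f, rfl | hf, w, hw, hjw⟩
    · rcases Sym2.mem_iff.1 hw with rfl | rfl
      · rw [← h.root_base j, hroot (c j) w hxc hjw, hρx]
      · exact absurd ⟨e, he, w, hy, hjw⟩ (hc j)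
    · exact absurd ⟨f, hf.1, w, hw, hjw⟩ (hc j)
  · rintro rfl
    exact ⟨_, Set.mem_insert _ _, x, Sym2.mem_mk_left x y, Or.inr hcx⟩
  · rintro u hui ⟨f, hf, w, hw, huw⟩
    have hfL : f ∈ L := by
      refine ⟨hf, fun z hz hρz => hui ?_⟩
      have hwz : w = z ∨ G.Adj w z := or_iff_not_imp_left.2 fun hne =>
        (mem_edgeSet G).1 ((Sym2.mem_and_mem_iff hne).1 ⟨hw, hz⟩ ▸ hM.1 hf)
      rw [hroot u w (hoff f hf w hw) huw, hroot w z (hoff f hf z hz) hwz, hρz]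
    exact ⟨f, Set.mem_insert_of_mem _ hfL, w, hw, huw⟩

end IsHungOn

end HungGraphs

section Rotation

variable {V : Type*} {n : ℕ} {G : SimpleGraph V} {c : Fin (n + 2) → V} {ρ : V → Fin (n + 2)}

/-- Rotation of a cycle graph by `k` steps. -/
def cycleRotation (k : Fin (n + 2)) : cycleGraph (n + 2) ≃g cycleGraph (n + 2) where
  toEquiv := Equiv.addRight k
  map_rel_iff' := by simp [cycleGraph_adj]

theorem range_comp_cycleRotation (c : Fin (n + 2) → V) (k : Fin (n + 2)) :
    Set.range (c ∘ cycleRotation k) = Set.range c :=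
  (cycleRotation k).surjective.range_comp c

theorem IsHungOn.rotate (h : IsHungOn G (cycleGraph (n + 2)) c ρ) (k : Fin (n + 2)) :
    IsHungOn G (cycleGraph (n + 2)) (c ∘ cycleRotation k) ((cycleRotation k).symm ∘ ρ) :=
  h.relabel (cycleRotation k)

end Rotation

section CycleOfLengthEleven

variable {V : Type*} [Finite V] {G : SimpleGraph V} {c : Fin 11 → V} {ρ : V → Fin 11}

namespace IsHungOn

set_option maxRecDepth 4000 in
theorem hasPendantPath_two (h : IsHungOn G (cycleGraph 11) c ρ) (hG : WellIndumatched G)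
    (hS : IsShallow G (Set.range c)) (h0 : HasPendantPath G (Set.range c) (c 0)) :
    HasPendantPath G (Set.range c) (c 2) := by
  by_contra h2
  let A : Finset (Sym2 (Fin 11)) := {s(0, 1), s(4, 5)}
  let B : Finset (Sym2 (Fin 11 ⊕ Fin 11)) :=
    {s(.inl 1, .inl 2), s(.inl 4, .inl 5), s(.inr 0, .inr 0)}
  have hlift : ∀ e ∈ B, e ∈ Sym2.map (shadow c ρ) '' G.edgeSet := by
    simp only [B, Finset.forall_mem_insert, Finset.mem_singleton, forall_eq]
    exact ⟨h.lift_base_edge (by decide), h.lift_base_edge (by decide), h.lift_branch_edge h0⟩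
  have hbase : ∀ i, .inl i ∈ closedNeighbors (corona (cycleGraph 11)) B →
      c i ∉ (residualGraph G (Sym2.map c '' A)).support := by
    have hdom : ∀ i, .inl i ∈ closedNeighbors (corona (cycleGraph 11)) B →
        i ∈ closedNeighbors (cycleGraph 11) A := by decide +zetaReduce
    exact fun i hi => h.base_notMem_support (hdom i hi)
  have hbranch : ∀ u ∉ Set.range c, .inr (ρ u) ∈ closedNeighbors (corona (cycleGraph 11)) B →
      u ∉ (residualGraph G (Sym2.map c '' A)).support := by
    have hcover : ∀ i, .inr i ∈ closedNeighbors (corona (cycleGraph 11)) B →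
        (∃ e ∈ A, i ∈ e) ∨ i = 2 := by decide +zetaReduce
    intro u hu hmem
    rcases hcover _ hmem with ⟨e, he, hroot⟩ | hroot
    · exact h.branch_notMem_support_of_mem hS he hu hroot
    · exact h.branch_notMem_support_of_not_hasPendantPath hS hu (hroot ▸ h2)
        (hbase _ (inl_mem_closedNeighbors_corona hmem))
  have hcard : B.card ≤ A.card :=
    h.card_le hG (by decide +zetaReduce) hlift (by decide +zetaReduce) hbase hbranch
  exact absurd hcard (by decide +zetaReduce)

theorem hasPendantPath_add_two (h : IsHungOn G (cycleGraph 11) c ρ) (hG : WellIndumatched G)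
    (hS : IsShallow G (Set.range c)) (k : Fin 11)
    (hk : HasPendantPath G (Set.range c) (c k)) : HasPendantPath G (Set.range c) (c (2 + k)) := by
  rw [← range_comp_cycleRotation c k] at hS hk ⊢
  exact (h.rotate k).hasPendantPath_two hG hS (by simpa [cycleRotation] using hk)

set_option maxRecDepth 4000 in
theorem not_hasPendantPath_zero_and_one (h : IsHungOn G (cycleGraph 11) c ρ)
    (hG : WellIndumatched G) (hS : IsShallow G (Set.range c))
    (h0 : HasPendantPath G (Set.range c) (c 0)) : ¬ HasPendantPath G (Set.range c) (c 1) := by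
  intro h1
  let A : Finset (Sym2 (Fin 11)) := {s(0, 1)}
  let B : Finset (Sym2 (Fin 11 ⊕ Fin 11)) := {s(.inr 0, .inr 0), s(.inr 1, .inr 1)}
  have hlift : ∀ e ∈ B, e ∈ Sym2.map (shadow c ρ) '' G.edgeSet := by
    simp only [B, Finset.forall_mem_insert, Finset.mem_singleton, forall_eq]
    exact ⟨h.lift_branch_edge h0, h.lift_branch_edge h1⟩
  have hdom : ∀ i, .inl i ∈ closedNeighbors (corona (cycleGraph 11)) B →
      i ∈ closedNeighbors (cycleGraph 11) A := by decide +zetaReduce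
  have hcover : ∀ i, .inr i ∈ closedNeighbors (corona (cycleGraph 11)) B → i ∈ s(0, 1) := by
    decide +zetaReduce
  have hcard : B.card ≤ A.card :=
    h.card_le hG (by decide +zetaReduce) hlift (by decide +zetaReduce)
      (fun i hi => h.base_notMem_support (hdom i hi))
      (fun u hu hmem => h.branch_notMem_support_of_mem hS (Finset.mem_singleton_self _) hu
        (hcover _ hmem))
  exact absurd hcard (by decide +zetaReduce)

theorem not_hasPendantPath (h : IsHungOn G (cycleGraph 11) c ρ) (hG : WellIndumatched G)
    (hS : IsShallow G (Set.range c)) (k : Fin 11) : ¬ HasPendantPath G (Set.range c) (c k) := by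
  suffices hzero : ∀ c : Fin 11 → V, ∀ ρ, IsHungOn G (cycleGraph 11) c ρ →
      IsShallow G (Set.range c) → ¬ HasPendantPath G (Set.range c) (c 0) by
    rw [← range_comp_cycleRotation c k] at hS ⊢
    simpa [cycleRotation] using hzero _ _ (h.rotate k) hS
  intro c ρ h hS h0
  have step := h.hasPendantPath_add_two hG hS
  exact h.not_hasPendantPath_zero_and_one hG hS h0
    (step 10 (step 8 (step 6 (step 4 (step 2 (step 0 h0))))))

set_option maxRecDepth 4000 in
theorem hasPendantVertex_three (h : IsHungOn G (cycleGraph 11) c ρ) (hG : WellIndumatched G)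
    (hS : IsShallow G (Set.range c)) (h0 : HasPendantVertex G (Set.range c) (c 0)) :
    HasPendantVertex G (Set.range c) (c 3) := by
  by_contra h3
  let A : Finset (Sym2 (Fin 11)) := {s(0, 1), s(5, 6)}
  let B : Finset (Sym2 (Fin 11 ⊕ Fin 11)) :=
    {s(.inl 0, .inr 0), s(.inl 2, .inl 3), s(.inl 5, .inl 6)}
  have hlift : ∀ e ∈ B, e ∈ Sym2.map (shadow c ρ) '' G.edgeSet := by
    simp only [B, Finset.forall_mem_insert, Finset.mem_singleton, forall_eq]
    exact ⟨h.lift_pendant_edge h0, h.lift_base_edge (by decide), h.lift_base_edge (by decide)⟩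
  have hbase : ∀ i, .inl i ∈ closedNeighbors (corona (cycleGraph 11)) B →
      c i ∉ (residualGraph G (Sym2.map c '' A)).support := by
    have hcover : ∀ i, .inl i ∈ closedNeighbors (corona (cycleGraph 11)) B →
        i ∈ closedNeighbors (cycleGraph 11) A ∨ i = 3 := by decide +zetaReduce
    intro i hi
    rcases hcover i hi with hi | rfl
    · exact h.base_notMem_support hi
    · exact h.base_notMem_support_of_forall_adj h3 (by decide +zetaReduce)
  have hcard : B.card ≤ A.card :=
    h.card_le_of_forall_not_hasPendantPath hG hS (h.not_hasPendantPath hG hS)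
      (by decide +zetaReduce) hlift (by decide +zetaReduce) hbase
  exact absurd hcard (by decide +zetaReduce)

set_option maxRecDepth 4000 in
theorem not_hasPendantVertex_zero_and_five (h : IsHungOn G (cycleGraph 11) c ρ)
    (hG : WellIndumatched G) (hS : IsShallow G (Set.range c))
    (h0 : HasPendantVertex G (Set.range c) (c 0)) : ¬ HasPendantVertex G (Set.range c) (c 5) := by
  intro h5
  let A : Finset (Sym2 (Fin 11)) := {s(0, 1), s(4, 5)}
  let B : Finset (Sym2 (Fin 11 ⊕ Fin 11)) :=
    {s(.inl 0, .inr 0), s(.inl 2, .inl 3), s(.inl 5, .inr 5)}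
  have hlift : ∀ e ∈ B, e ∈ Sym2.map (shadow c ρ) '' G.edgeSet := by
    simp only [B, Finset.forall_mem_insert, Finset.mem_singleton, forall_eq]
    exact ⟨h.lift_pendant_edge h0, h.lift_base_edge (by decide), h.lift_pendant_edge h5⟩
  have hcover : ∀ i, .inl i ∈ closedNeighbors (corona (cycleGraph 11)) B →
      i ∈ closedNeighbors (cycleGraph 11) A := by decide +zetaReduce
  have hcard : B.card ≤ A.card :=
    h.card_le_of_forall_not_hasPendantPath hG hS (h.not_hasPendantPath hG hS)
      (by decide +zetaReduce) hlift (by decide +zetaReduce)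
      (fun i hi => h.base_notMem_support (hcover i hi))
  exact absurd hcard (by decide +zetaReduce)

theorem not_hasPendantVertex (h : IsHungOn G (cycleGraph 11) c ρ) (hG : WellIndumatched G)
    (hS : IsShallow G (Set.range c)) (k : Fin 11) : ¬ HasPendantVertex G (Set.range c) (c k) := by
  intro hk
  have add_three : ∀ k, HasPendantVertex G (Set.range c) (c k) →
      HasPendantVertex G (Set.range c) (c (3 + k)) := by
    intro k hk
    rw [← range_comp_cycleRotation c k] at hS hk ⊢
    exact (h.rotate k).hasPendantVertex_three hG hS (by simpa [cycleRotation] using hk)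
  have hk6 : HasPendantVertex G (Set.range c) (c (3 + (3 + k))) := add_three _ (add_three _ hk)
  have hk0 : ¬ HasPendantVertex G (Set.range c) (c (5 + (3 + (3 + k)))) := by
    rw [← range_comp_cycleRotation c (3 + (3 + k))] at hS hk6 ⊢
    exact (h.rotate _).not_hasPendantVertex_zero_and_five hG hS
      (by simpa [cycleRotation] using hk6)
  have period : ∀ k : Fin 11, 5 + (3 + (3 + k)) = k := by decide
  exact hk0 ((period k).symm ▸ hk)

theorem support_subset_range_of_isShallow (h : IsHungOn G (cycleGraph 11) c ρ)
    (hG : WellIndumatched G) (hS : IsShallow G (Set.range c)) : G.support ⊆ Set.range c := by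
  rintro u ⟨v, huv⟩
  by_contra hu
  have hbare := h.not_hasPendantVertex hG hS
  by_cases hv : v ∈ Set.range c
  · obtain ⟨j, rfl⟩ := hv
    exact hbare j ⟨u, hu, huv.symm⟩
  · exact (h.adj_root_or_adj_root hS hu huv).elim (fun hadj => hbare _ ⟨u, hu, hadj⟩)
      (fun hadj => hbare _ ⟨v, hv, hadj⟩)

set_option maxRecDepth 4000 in
theorem not_wellIndumatched_of_deleteIncidenceSet
    (h : IsHungOn G ((cycleGraph 11).deleteIncidenceSet 0) c ρ)
    (hbare : ∀ u ∈ G.support, ρ u ≠ 0 → u ∈ Set.range c) : ¬ WellIndumatched G := by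
  intro hG
  let F : SimpleGraph (Fin 11) := (cycleGraph 11).deleteIncidenceSet 0
  let A : Finset (Sym2 (Fin 11)) := {s(3, 4), s(7, 8)}
  let B : Finset (Sym2 (Fin 11 ⊕ Fin 11)) :=
    {s(.inl 1, .inl 2), s(.inl 4, .inl 5), s(.inl 7, .inl 8)}
  have hlift : ∀ e ∈ B, e ∈ Sym2.map (shadow c ρ) '' G.edgeSet := by
    simp only [B, Finset.forall_mem_insert, Finset.mem_singleton, forall_eq]
    exact ⟨h.lift_base_edge (by decide), h.lift_base_edge (by decide),
      h.lift_base_edge (by decide)⟩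
  have hbase : ∀ i, .inl i ∈ closedNeighbors (corona F) B →
      c i ∉ (residualGraph G (Sym2.map c '' A)).support := by
    have hcover : ∀ i, .inl i ∈ closedNeighbors (corona F) B →
        i ∈ closedNeighbors F A ∨ i = 1 := by decide +zetaReduce
    intro i hi
    rcases hcover i hi with hi | rfl
    · exact h.base_notMem_support hi
    · refine h.base_notMem_support_of_forall_adj ?_ (by decide +zetaReduce)
      rintro ⟨z, hz, hadj⟩
      exact hz (hbare z ⟨_, hadj.symm⟩ (by simp [h.root_eq_of_adj_base hz hadj]))
  have hbranch : ∀ u ∉ Set.range c, .inr (ρ u) ∈ closedNeighbors (corona F) B →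
      u ∉ (residualGraph G (Sym2.map c '' A)).support := by
    have hroot : ∀ i, .inr i ∈ closedNeighbors (corona F) B → i ≠ 0 := by decide +zetaReduce
    rintro u hu hmem ⟨v, huv⟩
    exact hu (hbare u ⟨v, huv.1⟩ (hroot _ hmem))
  have hcard : B.card ≤ A.card :=
    h.card_le hG (by decide +zetaReduce) hlift (by decide +zetaReduce) hbase hbranch
  exact absurd hcard (by decide +zetaReduce)

theorem not_hasPendantVertex_zero (h : IsHungOn G (cycleGraph 11) c ρ) (hG : WellIndumatched G) :
    ¬ HasPendantVertex G (Set.range c) (c 0) := by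
  rintro ⟨x, hxc, hcx⟩
  obtain ⟨K, hK, hdisj, hS⟩ :=
    exists_isInducedMatching_isShallow_residualGraph G (Set.range c)
  have hcK : ∀ i, c i ∉ closedNeighbors G K := fun i =>
    Set.disjoint_left.1 hdisj (Set.mem_range_self i)
  have hsupp : (residualGraph G K).support ⊆ Set.range c := by
    refine IsHungOn.support_subset_range_of_isShallow (h.of_le residualGraph_le fun i j => ?_)
      (hG.residual hK) hS
    exact ⟨fun hij => (h.adj_iff i j).1 hij.1, fun hij => ⟨(h.adj_iff i j).2 hij, hcK i, hcK j⟩⟩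
  have hxK : x ∈ closedNeighbors G K := by
    by_contra hxK
    exact hxc (hsupp ⟨c 0, hcx.symm, hxK, hcK 0⟩)
  obtain ⟨N, hN, hcN, hKN⟩ :=
    h.exists_isInducedMatching_dominating_base_iff hK hdisj hxc hcx hxK
  have hhung : IsHungOn (residualGraph G N) ((cycleGraph 11).deleteIncidenceSet 0) c ρ := by
    refine h.of_le residualGraph_le fun i j => ?_
    rw [deleteIncidenceSet_adj, ← h.adj_iff, ne_eq, ne_eq, ← hcN, ← hcN]
    rfl
  refine hhung.not_wellIndumatched_of_deleteIncidenceSet ?_ (hG.residual hN)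
  rintro u ⟨v, huv, huN, hvN⟩ hu0
  by_contra huc
  have hv0 : ρ v ≠ 0 := h.root_eq u v huv huc ▸ hu0
  exact huc (hsupp ⟨v, huv, mt (hKN u hu0) huN, mt (hKN v hv0) hvN⟩)

theorem range_eq_univ (h : IsHungOn G (cycleGraph 11) c ρ) (hG : WellIndumatched G)
    (hconn : G.Preconnected) : Set.range c = Set.univ := by
  refine eq_univ_of_preconnected_of_forall_adj hconn (Set.range_nonempty c) ?_
  rintro _ ⟨k, rfl⟩ v hkv
  by_contra hv
  rw [← range_comp_cycleRotation c k] at hv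
  exact (h.rotate k).not_hasPendantVertex_zero hG ⟨v, hv, by simpa [cycleRotation] using hkv⟩

end IsHungOn

end CycleOfLengthEleven

section Unicyclic

variable {V ι : Type*} {G : SimpleGraph V} {F : SimpleGraph ι} {E : Set (Sym2 V)}

/-- The edges outside `E` are bridges, and a bridge on a path from `a` to `b` lies on every walk
from `a` to `b`. -/
theorem eq_of_reachable_deleteEdges
    (hE : ∀ (w : V) (D : G.Walk w w), D.IsCycle → ∀ e ∈ D.edges, e ∈ E) {a b : V}
    (hab : (G.deleteEdges E).Reachable a b) (q : G.Walk a b) (hq : ∀ e ∈ q.edges, e ∈ E) :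
    a = b := by
  obtain ⟨p, hp⟩ := hab.exists_isPath
  cases p with
  | nil => rfl
  | @cons _ w _ haw p =>
    obtain ⟨hadj, hmem⟩ := deleteEdges_adj.1 haw
    have hbridge : G.IsBridge s(a, w) :=
      (isBridge_iff_forall_cycle_notMem hadj).2 fun v D hD he => hmem (hE v D hD _ he)
    have hdetour := isBridge_iff_forall_walk_mem_edges.1 hbridge
      (q.append (p.mapLe (deleteEdges_le E)).reverse)
    rw [Walk.edges_append, List.mem_append, Walk.edges_reverse, List.mem_reverse,
      Walk.edges_mapLe_eq_edges] at hdetour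
    rcases hdetour with he | he
    · exact absurd (hq _ he) hmem
    · exact absurd (p.fst_mem_support_of_mem_edges he) ((Walk.cons_isPath_iff haw p).1 hp).2

theorem exists_isHungOn [Nonempty ι] (hG : G.Preconnected) (hF : F.Preconnected) (f : F →g G)
    (hf : Function.Injective f)
    (hcycle : ∀ (w : V) (D : G.Walk w w), D.IsCycle → ∀ e ∈ D.edges, e ∈ Sym2.map f '' F.edgeSet) :
    ∃ ρ, IsHungOn G F f ρ := by
  let G' : SimpleGraph V := G.deleteEdges (Sym2.map f '' F.edgeSet)
  have hadj' : ∀ {u v}, G.Adj u v → s(u, v) ∉ Sym2.map f '' F.edgeSet → G'.Adj u v :=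
    fun huv he => deleteEdges_adj.2 ⟨huv, he⟩
  have hroot : ∀ {i j}, G'.Reachable (f i) (f j) → i = j := by
    intro i j hij
    obtain ⟨q⟩ := hF i j
    refine hf (eq_of_reachable_deleteEdges hcycle hij (q.map f) fun e he => ?_)
    obtain ⟨e', he', rfl⟩ := List.mem_map.1 (q.edges_map f ▸ he)
    exact ⟨e', q.edges_subset_edgeSet he', rfl⟩
  have hend : ∀ {u v}, s(u, v) ∈ Sym2.map f '' F.edgeSet → u ∈ Set.range f := by
    rintro u v ⟨e, -, he⟩
    obtain ⟨i, -, hi⟩ := Sym2.mem_map.1 (he ▸ Sym2.mem_mk_left u v)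
    exact ⟨i, hi⟩
  have hreach : {u | ∃ i, G'.Reachable u (f i)} = Set.univ := by
    refine eq_univ_of_preconnected_of_forall_adj hG
      ⟨f (Classical.arbitrary ι), _, Reachable.refl _⟩ ?_
    rintro u ⟨i, hi⟩ v huv
    by_cases he : s(v, u) ∈ Sym2.map f '' F.edgeSet
    · obtain ⟨j, rfl⟩ := hend he
      exact ⟨j, Reachable.refl _⟩
    · exact ⟨i, (hadj' huv.symm he).reachable.trans hi⟩
  choose ρ hρ using Set.eq_univ_iff_forall.1 hreach
  refine ⟨ρ, fun i j => ⟨fun hij => ?_, f.map_adj⟩, fun i => (hroot (hρ (f i))).symm,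
    fun u v huv hu => hroot (((hρ u).symm.trans (hadj' huv (mt hend hu)).reachable).trans (hρ v))⟩
  by_cases he : s(f i, f j) ∈ Sym2.map f '' F.edgeSet
  · rwa [← Sym2.map_mk, (Sym2.map.injective hf).mem_set_image] at he
  · exact absurd (congrArg f (hroot (hadj' hij he).reachable)) hij.ne

theorem exists_isHungOn_cycleGraph {n : ℕ} (hG : G.Preconnected) {v : V} {C : G.Walk v v}
    (hC : C.IsCycle) (hlen : C.length = n + 3)
    (huniq : ∀ (w : V) (D : G.Walk w w), D.IsCycle → ∀ e, e ∈ D.edges ↔ e ∈ C.edges) :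
    ∃ c ρ, IsHungOn G (cycleGraph (n + 3)) c ρ := by
  obtain ⟨φ⟩ := (cycleGraph_isContained_iff (by lia)).2 ⟨v, C, hC, hlen⟩
  have hcopy : ((cycleGraph.cycle n).map φ.toHom).IsCycle :=
    (Walk.isCycle_map_iff_of_injective φ.injective).2 cycleGraph.isCycle_cycle
  refine ⟨φ.toHom, exists_isHungOn hG cycleGraph_preconnected φ.toHom φ.injective ?_⟩
  intro w D hD e he
  obtain ⟨e', he', rfl⟩ := List.mem_map.1
    (Walk.edges_map φ.toHom _ ▸ (huniq _ _ hcopy e).2 ((huniq w D hD e).1 he))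
  exact ⟨e', Walk.edges_subset_edgeSet _ he', rfl⟩

end Unicyclic

/-- Every well-indumatched unicyclic graph whose unique cycle has length `11` is
isomorphic to the cycle `C₁₁`. -/
theorem stmt_16 {V : Type*} [Fintype V] (G : SimpleGraph V)
    (hWIM : WellIndumatched G) (hconn : G.Connected)
    (v : V) (C : G.Walk v v) (hC : C.IsCycle) (hlen : C.length = 11)
    (huniq : ∀ (w : V) (D : G.Walk w w), D.IsCycle → ∀ e, e ∈ D.edges ↔ e ∈ C.edges) :
    Nonempty (G ≃g SimpleGraph.cycleGraph 11) := by
  obtain ⟨c, ρ, h⟩ := exists_isHungOn_cycleGraph hconn.preconnected hC hlen huniq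
  exact h.nonempty_iso (h.range_eq_univ hWIM hconn.preconnected)
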